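/- Splitting preserves and reflects the cycles characterizing causal consistency: for any trace τ over (T,X,V), the conjunction '(po ∪ rf ∪ sto)⁺ is irreflexive and (po ∪ rf)⁺ ; cf is irreflexive' holds for τ if and only if the conjunction '(po' ∪ rf' ∪ sto')⁺ is irreflexive and (po' ∪ rf')⁺ ; cf' is irreflexive' holds for its split trace τ_split. (Combinatorial core of the proof of Lemma 3.) -/

import Mathlib

open scoped Classical

/-- A trace over `(T, X, V)`: transactions `T`, shared variables `X`, values `V`.
Each transaction has a read set `RS` with read values `rdval`, a write set `WS`
with last-written values `wrval`; there is an initial transaction `t0`, a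
program order `po`, per-variable read-from relations `rf x` and per-variable
store orders `sto x`. -/
structure TxnTrace (T X V : Type*) where
  RS : T → Set X
  WS : T → Set X
  rdval : T → X → V
  wrval : T → X → V
  t0 : T
  po : T → T → Prop
  rf : X → T → T → Prop
  sto : X → T → T → Prop

/-- a strict partial order: irreflexive and transitive binary relation -/
def StrictPartialRel {α : Type*} (r : α → α → Prop) : Prop :=
  (∀ a, ¬ r a a) ∧ ∀ a b c, r a b → r b c → r a c

/-- a strict total order -/
def StrictTotalRel {α : Type*} (r : α → α → Prop) : Prop :=
  StrictPartialRel r ∧ ∀ a b, a ≠ b → r a b ∨ r b a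

/-- axiom Prefix: `arb ; vis ⊆ vis` -/
def PrefixAx {α : Type*} (vis arb : α → α → Prop) : Prop :=
  ∀ a b c, arb a b → vis b c → vis a c

/-- `vis` is a strict partial order, `arb` a strict total order, `vis ⊆ arb` -/
def GoodPair {α : Type*} (vis arb : α → α → Prop) : Prop :=
  StrictPartialRel vis ∧ StrictTotalRel arb ∧ ∀ a b, vis a b → arb a b

namespace TxnTrace

variable {T X V : Type*} (τ : TxnTrace T X V)

/-- the well-formedness conditions of a trace -/
structure WellFormed : Prop where
  rs_init : τ.RS τ.t0 = ∅
  ws_init : τ.WS τ.t0 = Set.univ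
  po_irrefl : ∀ t, ¬ τ.po t t
  po_trans : ∀ a b c, τ.po a b → τ.po b c → τ.po a c
  po_init : ∀ t, t ≠ τ.t0 → τ.po τ.t0 t
  rf_wf : ∀ x t' t, τ.rf x t' t →
    t' ≠ t ∧ x ∈ τ.RS t ∧ x ∈ τ.WS t' ∧ τ.wrval t' x = τ.rdval t x
  rf_total : ∀ t x, x ∈ τ.RS t → ∃! t', τ.rf x t' t
  sto_dom : ∀ x a b, τ.sto x a b → x ∈ τ.WS a ∧ x ∈ τ.WS b
  sto_irrefl : ∀ x a, ¬ τ.sto x a a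
  sto_trans : ∀ x a b c, τ.sto x a b → τ.sto x b c → τ.sto x a c
  sto_total : ∀ x a b, x ∈ τ.WS a → x ∈ τ.WS b → a ≠ b → τ.sto x a b ∨ τ.sto x b a

/-- `rf = ⋃ x, rf x` -/
def rfR (a b : T) : Prop := ∃ x, τ.rf x a b

/-- `sto = ⋃ x, sto x` -/
def stoR (a b : T) : Prop := ∃ x, τ.sto x a b

/-- the conflict relation: `(t1,t3) ∈ cf` iff `t1 ≠ t3` and there are `x`, `t2`
with `(t2,t1) ∈ rf_x` and `(t2,t3) ∈ sto_x` -/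
def cf (a b : T) : Prop := a ≠ b ∧ ∃ x w, τ.rf x w a ∧ τ.sto x w b

/-- `vis0 = po ∪ rf` -/
def vis0 (a b : T) : Prop := τ.po a b ∨ τ.rfR a b

/-- `arb0 = po ∪ rf ∪ sto` -/
def arb0 (a b : T) : Prop := τ.po a b ∨ τ.rfR a b ∨ τ.stoR a b

/-- happens-before: `(po ∪ rf ∪ sto ∪ cf)⁺` -/
def hb : T → T → Prop := Relation.TransGen (fun a b => τ.arb0 a b ∨ τ.cf a b)

/-- axiom PoCo: `vis0⁺ ⊆ vis` -/
def PoCo (vis : T → T → Prop) : Prop := ∀ a b, Relation.TransGen τ.vis0 a b → vis a b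

/-- axiom CoArb: `arb0⁺ ⊆ arb` -/
def CoArb (arb : T → T → Prop) : Prop := ∀ a b, Relation.TransGen τ.arb0 a b → arb a b

/-- axiom RetVal: every read of `x` in `t` reads from the `arb`-greatest
`vis`-predecessor of `t` writing `x` -/
def RetVal (vis arb : T → T → Prop) : Prop :=
  ∀ t x, x ∈ τ.RS t → ∃ t00,
    (vis t00 t ∧ x ∈ τ.WS t00) ∧
    (∀ t', vis t' t → x ∈ τ.WS t' → t' ≠ t00 → arb t' t00) ∧
    τ.rf x t00 t


/-- axiom Conflict: `sto ⊆ vis` -/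
def ConflictAx (vis : T → T → Prop) : Prop := ∀ a b, τ.stoR a b → vis a b


/-- causal consistency -/
def IsCC : Prop :=
  ∃ vis arb, GoodPair vis arb ∧ τ.PoCo vis ∧ τ.CoArb arb ∧ τ.RetVal vis arb

/-- prefix consistency -/
def IsPC : Prop :=
  ∃ vis arb, GoodPair vis arb ∧ τ.PoCo vis ∧ τ.CoArb arb ∧ τ.RetVal vis arb ∧
    PrefixAx vis arb

/-- snapshot isolation -/
def IsSI : Prop :=
  ∃ vis arb, GoodPair vis arb ∧ τ.PoCo vis ∧ τ.CoArb arb ∧ τ.RetVal vis arb ∧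
    PrefixAx vis arb ∧ τ.ConflictAx vis

/-- serializability: some strict total order `arb` with `arb0⁺ ⊆ arb` satisfies
RetVal with `vis = arb` -/
def IsSER : Prop :=
  ∃ arb, StrictTotalRel arb ∧ τ.CoArb arb ∧ τ.RetVal arb arb

/-- the read part `t_rd` of a transaction in the split trace -/
def rdPart (t : T) : T × Bool := (t, false)

/-- the write part `t_wr` of a transaction in the split trace;
the initial transaction `t0` is kept unchanged and plays both roles -/
noncomputable def wrPart (t : T) : T × Bool := if t = τ.t0 then (t, false) else (t, true)

/-- the split trace `τ_split`: every transaction `t ≠ t0` is split into a read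
part `t_rd` and a write part `t_wr`; `po'` is the smallest transitive relation
containing `(t_rd, t_wr)` for every split `t` and `(u_wr, v_rd)` for `(u,v) ∈ po`;
`rf'_x = {(u_wr, v_rd) : (u,v) ∈ rf_x}`; `sto'_x = {(u_wr, v_wr) : (u,v) ∈ sto_x}`.
(The pair `(t0, true)` is an unused dummy element with empty read and write sets and
no incident relations.) -/
noncomputable def split : TxnTrace (T × Bool) X V where
  RS p := if p = rdPart p.1 then τ.RS p.1 else ∅
  WS p := if p = τ.wrPart p.1 then τ.WS p.1 else ∅
  rdval p x := τ.rdval p.1 x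
  wrval p x := τ.wrval p.1 x
  t0 := (τ.t0, false)
  po := Relation.TransGen (fun a b =>
    (∃ t, t ≠ τ.t0 ∧ a = rdPart t ∧ b = τ.wrPart t) ∨
    (∃ u v, τ.po u v ∧ a = τ.wrPart u ∧ b = rdPart v))
  rf := fun x a b => ∃ u v, τ.rf x u v ∧ a = τ.wrPart u ∧ b = rdPart v
  sto := fun x a b => ∃ u v, τ.sto x u v ∧ a = τ.wrPart u ∧ b = τ.wrPart v

end TxnTrace

/-!
Order `T × Bool` lexicographically, with `TransGen r` on `T` and read part before write part. Every
edge of the split trace increases in this order, `r` being the matching relation of `τ`, so a path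
of the split trace projects to a path of `τ` or stays within one transaction, going from its read
part to its write part. Conversely, a path of `τ` is followed in the split trace by crossing each
intermediate transaction from its read part to its write part.

The only conflict edge of the split trace without a counterpart in `τ` goes from `t_rd` to `t_wr`,
where `t` overwrites a version it has read. Closing it by a visibility path from `t_wr` to `t_rd`
would make `po ∪ rf` cyclic.
-/

namespace TxnTrace

open Relation

variable {T X V : Type*} {τ : TxnTrace T X V}

theorem vis0_le_arb0 : τ.vis0 ≤ τ.arb0 :=
  fun _ _ h => h.imp_right Or.inl

@[simp]
theorem rdPart_fst (t : T) : (rdPart t).1 = t :=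
  rfl

@[simp]
theorem wrPart_fst (t : T) : (τ.wrPart t).1 = t := by
  unfold wrPart
  split_ifs <;> rfl

theorem wrPart_injective : Function.Injective τ.wrPart :=
  Function.LeftInverse.injective (g := Prod.fst) wrPart_fst

theorem wrPart_of_ne {t : T} (ht : t ≠ τ.t0) : τ.wrPart t = (t, true) :=
  if_neg ht

theorem rdPart_t0_eq_wrPart : rdPart τ.t0 = τ.wrPart τ.t0 :=
  (if_pos rfl).symm

theorem split_po_le_lex {r : T → T → Prop} (hr : τ.po ≤ r) :
    τ.split.po ≤ Prod.Lex (TransGen r) (· < ·) := by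
  refine transGen_minimal ?_
  rintro _ _ (⟨t, ht, rfl, rfl⟩ | ⟨u, v, huv, rfl, rfl⟩)
  · rw [wrPart_of_ne ht]
    exact .right t Bool.false_lt_true
  · exact Prod.lex_def.2 (.inl (by simpa using .single (hr _ _ huv)))

theorem transGen_split_vis0_le_lex :
    TransGen τ.split.vis0 ≤ Prod.Lex (TransGen τ.vis0) (· < ·) := by
  refine transGen_minimal ?_
  rintro p q (hpo | ⟨x, u, v, hrf, rfl, rfl⟩)
  · exact split_po_le_lex (fun _ _ => Or.inl) p q hpo
  · exact Prod.lex_def.2 (.inl (by simpa using .single (.inr ⟨x, hrf⟩)))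

theorem transGen_split_arb0_le_lex :
    TransGen τ.split.arb0 ≤ Prod.Lex (TransGen τ.arb0) (· < ·) := by
  refine transGen_minimal ?_
  rintro p q (hpo | ⟨x, u, v, hrf, rfl, rfl⟩ | ⟨x, u, v, hsto, rfl, rfl⟩)
  · exact split_po_le_lex (fun _ _ => Or.inl) p q hpo
  · exact Prod.lex_def.2 (.inl (by simpa using .single (.inr (.inl ⟨x, hrf⟩))))
  · exact Prod.lex_def.2 (.inl (by simpa using .single (.inr (.inr ⟨x, hsto⟩))))

theorem reflGen_split_po_rdPart_wrPart (t : T) :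
    ReflGen τ.split.po (rdPart t) (τ.wrPart t) := by
  by_cases ht : t = τ.t0
  · rw [ht, rdPart_t0_eq_wrPart]
  · exact .single (.single (.inl ⟨t, ht, rfl, rfl⟩))

theorem split_vis0_wrPart_rdPart {u v : T} (h : τ.vis0 u v) :
    τ.split.vis0 (τ.wrPart u) (rdPart v) := by
  rcases h with hpo | ⟨x, hrf⟩
  · exact .inl (.single (.inr ⟨u, v, hpo, rfl, rfl⟩))
  · exact .inr ⟨x, u, v, hrf, rfl, rfl⟩

theorem transGen_split_vis0_wrPart {u v : T} (h : τ.vis0 u v) :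
    TransGen τ.split.vis0 (τ.wrPart u) (τ.wrPart v) :=
  .head' (split_vis0_wrPart_rdPart h)
    ((reflGen_split_po_rdPart_wrPart v).mono (fun _ _ => Or.inl)).to_reflTransGen

theorem transGen_split_arb0_wrPart {u v : T} (h : τ.arb0 u v) :
    TransGen τ.split.arb0 (τ.wrPart u) (τ.wrPart v) := by
  have of_vis0 (hvis : τ.vis0 u v) : TransGen τ.split.arb0 (τ.wrPart u) (τ.wrPart v) :=
    TransGen.mono vis0_le_arb0 _ _ (transGen_split_vis0_wrPart hvis)
  rcases h with hpo | hrf | ⟨x, hsto⟩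
  · exact of_vis0 (.inl hpo)
  · exact of_vis0 (.inr hrf)
  · exact .single (.inr (.inr ⟨x, u, v, hsto, rfl, rfl⟩))

theorem transGen_split_vis0_wrPart_rdPart_iff {u v : T} :
    TransGen τ.split.vis0 (τ.wrPart u) (rdPart v) ↔ TransGen τ.vis0 u v := by
  constructor
  · intro h
    rcases Prod.lex_def.1 (transGen_split_vis0_le_lex _ _ h) with hlt | ⟨-, hlt⟩
    · simpa using hlt
    · exact absurd hlt not_lt_bot
  · intro h
    obtain ⟨m, hum, hmv⟩ := TransGen.tail'_iff.1 h
    have hlift : ReflTransGen τ.split.vis0 (τ.wrPart u) (τ.wrPart m) :=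
      ReflTransGen.lift' τ.wrPart
        (fun _ _ hvis => (transGen_split_vis0_wrPart hvis).to_reflTransGen) _ _ hum
    exact .tail' hlift (split_vis0_wrPart_rdPart hmv)

theorem split_arb0_acyclic_iff :
    (∀ p, ¬ TransGen τ.split.arb0 p p) ↔ ∀ t, ¬ TransGen τ.arb0 t t := by
  constructor
  · exact fun h t ht => h (τ.wrPart t) <|
      TransGen.lift' τ.wrPart (fun _ _ => transGen_split_arb0_wrPart) _ _ ht
  · intro h p hp
    have : Std.Irrefl (TransGen τ.arb0) := ⟨h⟩
    exact irrefl p (transGen_split_arb0_le_lex p p hp)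

theorem split_cf_rdPart_wrPart {u v : T} (h : τ.cf u v) :
    τ.split.cf (rdPart u) (τ.wrPart v) := by
  obtain ⟨hne, x, w, hrf, hsto⟩ := h
  refine ⟨fun heq => hne ?_, x, τ.wrPart w, ⟨w, u, hrf, rfl, rfl⟩, ⟨w, v, hsto, rfl, rfl⟩⟩
  simpa using congrArg Prod.fst heq

theorem exists_eq_or_cf_of_split_cf {p q : T × Bool} (h : τ.split.cf p q) :
    ∃ u v, p = rdPart u ∧ q = τ.wrPart v ∧ (u = v ∨ τ.cf u v) := by
  obtain ⟨-, x, _, ⟨w, u, hrf, rfl, rfl⟩, ⟨w', v, hsto, hw, rfl⟩⟩ := h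
  obtain rfl := wrPart_injective hw
  exact ⟨u, v, rfl, rfl, or_iff_not_imp_left.2 fun hne => ⟨hne, x, w, hrf, hsto⟩⟩

theorem split_vis0_cf_acyclic_iff (hvis : ∀ t, ¬ TransGen τ.vis0 t t) :
    (∀ p q, TransGen τ.split.vis0 p q → ¬ τ.split.cf q p) ↔
      ∀ u v, TransGen τ.vis0 u v → ¬ τ.cf v u := by
  constructor
  · exact fun h u v huv hcf =>
      h _ _ (transGen_split_vis0_wrPart_rdPart_iff.2 huv) (split_cf_rdPart_wrPart hcf)
  · intro h p q hpq hcf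
    obtain ⟨v, u, rfl, rfl, huv⟩ := exists_eq_or_cf_of_split_cf hcf
    have hpath : TransGen τ.vis0 u v := transGen_split_vis0_wrPart_rdPart_iff.1 hpq
    rcases huv with rfl | hcf
    · exact hvis v hpath
    · exact h u v hpath hcf

end TxnTrace

open Relation TxnTrace in
theorem cc_cycles_iff_split_general {T X V : Type*} (τ : TxnTrace T X V) :
    ((∀ t, ¬ TransGen τ.arb0 t t) ∧ ∀ t1 t2, TransGen τ.vis0 t1 t2 → ¬ τ.cf t2 t1) ↔
    ((∀ p, ¬ TransGen τ.split.arb0 p p) ∧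
      ∀ p q, TransGen τ.split.vis0 p q → ¬ τ.split.cf q p) := by
  rw [split_arb0_acyclic_iff]
  refine and_congr_right fun harb => (split_vis0_cf_acyclic_iff fun t ht => ?_).symm
  exact harb t (TransGen.mono vis0_le_arb0 t t ht)

/-- combinatorial core of Lemma 3: the acyclicity conditions
characterizing CC hold for a trace iff they hold for its split trace. -/
theorem cc_cycles_iff_split {T X V : Type*} [Fintype T] (τ : TxnTrace T X V)
    (hwf : τ.WellFormed) :
    ((∀ t, ¬ Relation.TransGen τ.arb0 t t) ∧
      ∀ t1 t2, Relation.TransGen τ.vis0 t1 t2 → ¬ τ.cf t2 t1) ↔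
    ((∀ p, ¬ Relation.TransGen τ.split.arb0 p p) ∧
      ∀ p q, Relation.TransGen τ.split.vis0 p q → ¬ τ.split.cf q p) :=
  cc_cycles_iff_split_general τ
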